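/- arXiv:1710.02472 — 6 statements merged into one kernel-verified Lean document; each statement's English description precedes it below -/
import Mathlib

section
/- For every pair (x,y) ∈ LAJ(D,P) and all a,b ∈ {1,…,n}, the inequality Σ_{k≠a, l≠b} p_{ak} d_{bl} y_{abkl} ≥ l_{ab} x_{ab} holds; that is, the first Xia–Yuan inequality z_{ab} ≥ l_{ab} x_{ab} is valid for the projection of the relaxed Adams–Johnson linearization. -/
open Finset

/-- `x` is doubly stochastic (the relaxed permutation polytope `LX_n`). -/
def IsLXn {n : ℕ} (x : Fin n → Fin n → ℝ) : Prop :=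
  (∀ i j, 0 ≤ x i j) ∧ (∀ i, ∑ j, x i j = 1) ∧ (∀ j, ∑ i, x i j = 1)

/-- `(x, y)` lies in the linear relaxation `LAJ(D,P)` of the Adams–Johnson linearization. -/
def MemLAJ {n : ℕ} (x : Fin n → Fin n → ℝ)
    (y : Fin n → Fin n → Fin n → Fin n → ℝ) : Prop :=
  IsLXn x ∧
  (∀ i j k l, i ≠ k → j ≠ l → 0 ≤ y i j k l) ∧
  (∀ i j k l, i ≠ k → j ≠ l → y i j k l = y k l i j) ∧
  (∀ j k l, j ≠ l → ∑ i ∈ univ.erase k, y i j k l = x k l) ∧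
  (∀ i k l, i ≠ k → ∑ j ∈ univ.erase l, y i j k l = x k l)

/-- `v` is the minimum over all bijections `{1,…,n}\{i} → {1,…,n}\{j}` (equivalently,
permutations `σ` of `Fin n` with `σ i = j`) of `Σ_{k≠i} p_{ik} d_{j,σ(k)}`. -/
def IsLVal {n : ℕ} (P D : Fin n → Fin n → ℝ) (i j : Fin n) (v : ℝ) : Prop :=
  IsLeast {w : ℝ | ∃ σ : Equiv.Perm (Fin n), σ i = j ∧
    w = ∑ k ∈ univ.erase i, P i k * D j (σ k)} v

/-- the first Xia–Yuan inequality `z_{ab} ≥ l_{ab} x_{ab}` is valid for the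
projection of the relaxed Adams–Johnson linearization. -/
theorem first_XY_inequality_valid_for_proj_LAJ (n : ℕ) (hn : 2 ≤ n)
    (P D lo : Fin n → Fin n → ℝ)
    (hlo : ∀ i j, IsLVal P D i j (lo i j))
    (x : Fin n → Fin n → ℝ) (y : Fin n → Fin n → Fin n → Fin n → ℝ)
    (hxy : MemLAJ x y) (a b : Fin n) :
    lo a b * x a b ≤
      ∑ k ∈ univ.erase a, ∑ l ∈ univ.erase b, P a k * D b l * y a b k l := by
  obtain ⟨⟨hx0, -, -⟩, hy0, hsym, hcol, hrow⟩ := hxy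
  have hc : ∀ l, l ≠ b → ∑ k ∈ univ.erase a, y a b k l = x a b := by
    intro l hl
    rw [← hcol l a b hl]
    refine Finset.sum_congr rfl fun k hk => ?_
    exact hsym _ _ _ _ (Finset.ne_of_mem_erase hk).symm hl.symm
  have hr : ∀ k, k ≠ a → ∑ l ∈ univ.erase b, y a b k l = x a b := by
    intro k hk
    rw [← hrow k a b hk]
    refine Finset.sum_congr rfl fun l hl => ?_
    exact hsym _ _ _ _ hk.symm (Finset.ne_of_mem_erase hl).symm
  rcases (hx0 a b).eq_or_lt with h0 | hpos
  · rw [← h0, mul_zero]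
    refine Finset.sum_nonneg fun k hk => Finset.sum_nonneg fun l hl => ?_
    have hka := Finset.ne_of_mem_erase hk
    have h1 := hr k hka
    rw [← h0, Finset.sum_eq_zero_iff_of_nonneg
      (fun l hl => hy0 _ _ _ _ hka.symm (Finset.ne_of_mem_erase hl).symm)] at h1
    rw [h1 l hl, mul_zero]
  let M : Matrix (Fin n) (Fin n) ℝ := Matrix.of fun k l =>
    if k = a then (if l = b then 1 else 0) else (if l = b then 0 else y a b k l / x a b)
  have hM : M ∈ doublyStochastic ℝ (Fin n) := by
    rw [mem_doublyStochastic_iff_sum]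
    refine ⟨fun k l => ?_, fun k => ?_, fun l => ?_⟩
    · simp only [M, Matrix.of_apply]
      split_ifs with h1 h2 h3
      · exact zero_le_one
      · exact le_rfl
      · exact le_rfl
      · exact div_nonneg (hy0 _ _ _ _ (Ne.symm h1) (Ne.symm h3)) hpos.le
    · by_cases hk : k = a
      · simp [M, hk]
      · rw [← Finset.add_sum_erase _ _ (mem_univ b)]
        have : ∑ l ∈ univ.erase b, M k l = ∑ l ∈ univ.erase b, y a b k l / x a b :=
          Finset.sum_congr rfl fun l hl => by simp [M, hk, Finset.ne_of_mem_erase hl]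
        rw [this, ← Finset.sum_div, hr k hk, div_self hpos.ne']
        simp [M, hk]
    · by_cases hl : l = b
      · simp [M, hl]
      · rw [← Finset.add_sum_erase _ _ (mem_univ a)]
        have : ∑ k ∈ univ.erase a, M k l = ∑ k ∈ univ.erase a, y a b k l / x a b :=
          Finset.sum_congr rfl fun k hk => by simp [M, hl, Finset.ne_of_mem_erase hk]
        rw [this, ← Finset.sum_div, hc l hl, div_self hpos.ne']
        simp [M, hl]
  obtain ⟨w, hw0, hw1, hwM⟩ := exists_eq_sum_perm_of_mem_doublyStochastic hM
  have hent : ∀ k l, M k l = ∑ σ : Equiv.Perm (Fin n), w σ * (if σ k = l then 1 else 0) := by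
    intro k l
    rw [← hwM, Matrix.sum_apply]
    refine Finset.sum_congr rfl fun σ _ => ?_
    simp [Equiv.Perm.permMatrix, PEquiv.toMatrix_apply, eq_comm]
  have hsupp : ∀ σ : Equiv.Perm (Fin n), σ a ≠ b → w σ = 0 := by
    intro σ hσ
    have h1 : M a (σ a) = 0 := by simp [M, hσ]
    rw [hent, Finset.sum_eq_zero_iff_of_nonneg
      (fun τ _ => mul_nonneg (hw0 τ) (by split_ifs <;> norm_num))] at h1
    simpa using h1 σ (mem_univ σ)
  have key : ∑ k ∈ univ.erase a, ∑ l ∈ univ.erase b, P a k * D b l * y a b k l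
      = x a b * ∑ σ : Equiv.Perm (Fin n), w σ * ∑ k ∈ univ.erase a, P a k * D b (σ k) := by
    have e1 : ∀ k ∈ univ.erase a, ∑ l ∈ univ.erase b, P a k * D b l * y a b k l
        = x a b * ∑ σ : Equiv.Perm (Fin n), w σ * (P a k * D b (σ k)) := by
      intro k hk
      have hka := Finset.ne_of_mem_erase hk
      have e2 : ∑ l ∈ univ.erase b, P a k * D b l * y a b k l
          = ∑ l, P a k * D b l * (x a b * M k l) := by
        rw [← Finset.add_sum_erase univ _ (mem_univ b)]
        have : M k b = 0 := by simp [M, hka]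
        rw [this, mul_zero, mul_zero, zero_add]
        refine Finset.sum_congr rfl fun l hl => ?_
        have : M k l = y a b k l / x a b := by simp [M, hka, Finset.ne_of_mem_erase hl]
        rw [this, mul_div_cancel₀ _ hpos.ne']
      rw [e2]
      simp_rw [hent, Finset.mul_sum]
      rw [Finset.sum_comm]
      refine Finset.sum_congr rfl fun σ _ => ?_
      rw [Finset.sum_eq_single (σ k)]
      · simp; ring
      · intro l _ hl; simp [hl.symm]
      · simp
    rw [Finset.sum_congr rfl e1, ← Finset.mul_sum, Finset.sum_comm]
    simp_rw [Finset.mul_sum]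
  rw [key, mul_comm]
  refine mul_le_mul_of_nonneg_left ?_ hpos.le
  calc lo a b = ∑ σ : Equiv.Perm (Fin n), w σ * lo a b := by
        rw [← Finset.sum_mul, hw1, one_mul]
    _ ≤ _ := by
        refine Finset.sum_le_sum fun σ _ => ?_
        by_cases hσ : σ a = b
        · exact mul_le_mul_of_nonneg_left ((hlo a b).2 ⟨σ, hσ, rfl⟩) (hw0 σ)
        · simp [hsupp σ hσ]
end

section
/- For all a,b ∈ {1,…,n} there exist real multipliers β¹_l for l ∈ {1,…,n}\{b} and β²_k for k ∈ {1,…,n}\{a} such that −p_{ak} d_{bl} ≤ β¹_l + β²_k for all k≠a, l≠b, and Σ_{l≠b} β¹_l + Σ_{k≠a} β²_k = −l_{ab}. -/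
open Finset

theorem potential_aux {ι : Type*} [DecidableEq ι] (y z : ι → ℝ) (s : Finset ι) :
    (∀ i ∈ s, ∀ j ∈ s, y i < y j → z i ≤ z j) →
    ∃ w : ι → ℝ, ∀ i ∈ s, ∀ j ∈ s, z i * (y j - y i) ≤ w j - w i := by
  refine Finset.induction_on_max_value (fun i => y i + z i)
    (motive := fun s => (∀ i ∈ s, ∀ j ∈ s, y i < y j → z i ≤ z j) →
      ∃ w : ι → ℝ, ∀ i ∈ s, ∀ j ∈ s, z i * (y j - y i) ≤ w j - w i) s ?_ ?_
  · intro _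
    exact ⟨0, by simp⟩
  · intro m s hm hmax ih hmono
    obtain ⟨w, hw⟩ := ih (fun i hi j hj =>
      hmono i (mem_insert_of_mem hi) j (mem_insert_of_mem hj))
    rcases s.eq_empty_or_nonempty with rfl | hne
    · exact ⟨0, by simp⟩
    obtain ⟨q, hq, hqmax⟩ := s.exists_max_image (fun i => w i + z i * (y m - y i)) hne
    have hy : ∀ i ∈ s, y i ≤ y m := by
      intro i hi
      by_contra! h
      have h1 := hmono m (mem_insert_self _ _) i (mem_insert_of_mem hi) h
      have h2 := hmax i hi
      linarith
    have hz : ∀ i ∈ s, z i ≤ z m := by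
      intro i hi
      rcases (hy i hi).lt_or_eq with h | h
      · exact hmono i (mem_insert_of_mem hi) m (mem_insert_self _ _) h
      · have h2 := hmax i hi
        linarith
    have hneq : ∀ i ∈ s, i ≠ m := fun i hi h => hm (h ▸ hi)
    refine ⟨Function.update w m (w q + z q * (y m - y q)), ?_⟩
    intro i hi j hj
    rcases mem_insert.1 hi with rfl | hi' <;> rcases mem_insert.1 hj with rfl | hj'
    · simp
    · rw [Function.update_self, Function.update_of_ne (hneq j hj')]
      have h1 := hw q hq j hj'
      have h2 := mul_nonneg (sub_nonneg.2 (hz q hq)) (sub_nonneg.2 (hy j hj'))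
      nlinarith
    · rw [Function.update_self, Function.update_of_ne (hneq i hi')]
      have h1 := hqmax i hi'
      linarith
    · rw [Function.update_of_ne (hneq i hi'), Function.update_of_ne (hneq j hj')]
      exact hw i hi' j hj'

/-- existence of dual multipliers `β¹, β²` with
`−p_{ak} d_{bl} ≤ β¹_l + β²_k` for all `k≠a, l≠b`, summing to `−l_{ab}`. -/
theorem exists_multipliers_L (n : ℕ) (hn : 2 ≤ n)
    (P D lo : Fin n → Fin n → ℝ)
    (hlo : ∀ i j, IsLVal P D i j (lo i j)) (a b : Fin n) :
    ∃ (β1 β2 : Fin n → ℝ),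
      (∀ k l, k ≠ a → l ≠ b → -(P a k * D b l) ≤ β1 l + β2 k) ∧
      (∑ l ∈ univ.erase b, β1 l) + (∑ k ∈ univ.erase a, β2 k) = -(lo a b) := by
  obtain ⟨⟨σ, hσ, hval⟩, hmin⟩ := hlo a b
  have hmono : ∀ i ∈ univ.erase a, ∀ j ∈ univ.erase a,
      D b (σ i) < D b (σ j) → -P a i ≤ -P a j := by
    intro i hi j hj hlt
    have hia := (mem_erase.1 hi).1
    have hja := (mem_erase.1 hj).1
    have hij : i ≠ j := by
      rintro rfl
      exact lt_irrefl _ hlt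
    have h1 := hmin ⟨σ * Equiv.swap i j, by
      simp [Equiv.swap_apply_of_ne_of_ne hia.symm hja.symm, hσ], rfl⟩
    rw [hval, ← sub_nonneg, ← Finset.sum_sub_distrib] at h1
    rw [← Finset.sum_subset (s₁ := {i, j})] at h1
    · rw [Finset.sum_pair hij] at h1
      simp only [Equiv.Perm.mul_apply, Equiv.swap_apply_left, Equiv.swap_apply_right] at h1
      by_contra! h
      nlinarith [mul_pos (sub_pos.2 h) (sub_pos.2 hlt)]
    · intro x hx
      rcases mem_insert.1 hx with rfl | hx
      · exact hi
      · rw [mem_singleton.1 hx]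
        exact hj
    · intro x _ hx
      simp only [mem_insert, mem_singleton, not_or] at hx
      simp [Equiv.swap_apply_of_ne_of_ne hx.1 hx.2]
  obtain ⟨w, hw⟩ := potential_aux (fun k => D b (σ k)) (fun k => -P a k) _ hmono
  refine ⟨fun l => w (σ.symm l), fun k => -P a k * D b (σ k) - w k, ?_, ?_⟩
  · intro k l hk hl
    have h := hw k (by simp [hk]) (σ.symm l) (by
      simp only [mem_erase, mem_univ, and_true]
      intro h
      apply hl
      rw [← hσ, ← h, Equiv.apply_symm_apply])
    simp only [Equiv.apply_symm_apply] at h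
    linarith
  · have h : ∑ l ∈ univ.erase b, w (σ.symm l) = ∑ k ∈ univ.erase a, w k := by
      symm
      refine Finset.sum_equiv σ ?_ ?_
      · intro i
        simp [← hσ]
      · intro i _
        simp
    rw [h, hval, Finset.sum_sub_distrib]
    simp
end

section
/- Suppose there exist a,b,c,d ∈ {1,…,n} with a ≠ c and b ≠ d such that: (1) every bijection φ : {1,…,n}\{a} → {1,…,n}\{b} attaining the minimum l_{ab} satisfies φ(c) = d, and (2) every bijection ψ : {1,…,n}\{c} → {1,…,n}\{d} attaining the minimum l_{cd} satisfies ψ(a) ≠ b. Let x* be the uniform matrix with x*_{ij} = 1/n for all i,j. Then there is no family y such that (x*,y) ∈ LAJ(D,P) and z(y)_{ij} = l_{ij}/n for all i,j ∈ {1,…,n}. -/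
open Finset

/-- The projected variables `z(y)_{ij} = Σ_{k≠i, l≠j} p_{ik} d_{jl} y_{ijkl}`. -/
def projZ {n : ℕ} (P D : Fin n → Fin n → ℝ)
    (y : Fin n → Fin n → Fin n → Fin n → ℝ) (i j : Fin n) : ℝ :=
  ∑ k ∈ univ.erase i, ∑ l ∈ univ.erase j, P i k * D j l * y i j k l

theorem laj_decomp (n : ℕ) (hn : 2 ≤ n)
    (P D lo : Fin n → Fin n → ℝ)
    (hlo : ∀ i j, IsLVal P D i j (lo i j))
    (y : Fin n → Fin n → Fin n → Fin n → ℝ)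
    (hy : MemLAJ (fun _ _ => (1 : ℝ) / n) y)
    (hz : ∀ i j, projZ P D y i j = lo i j / n) (i j : Fin n) :
    ∃ w : Equiv.Perm (Fin n) → ℝ, ∑ σ, w σ = 1 ∧
      (∀ σ, w σ ≠ 0 → σ i = j ∧ (∑ k ∈ univ.erase i, P i k * D j (σ k)) = lo i j) ∧
      ∀ k l, k ≠ i → l ≠ j → (n : ℝ) * y i j k l = ∑ σ, if σ k = l then w σ else 0 := by
  obtain ⟨-, hpos, hsym, hcol, hrow⟩ := hy
  have hn0 : (n : ℝ) ≠ 0 := by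
    have : n ≠ 0 := by omega
    exact_mod_cast this
  let M : Matrix (Fin n) (Fin n) ℝ := fun k l =>
    if k = i then (if l = j then 1 else 0) else (if l = j then 0 else n * y i j k l)
  have hM : M ∈ doublyStochastic ℝ (Fin n) := by
    rw [mem_doublyStochastic_iff_sum]
    refine ⟨?_, ?_, ?_⟩
    · intro k l
      simp only [M]
      split_ifs with h1 h2 h2
      · exact zero_le_one
      · exact le_rfl
      · exact le_rfl
      · exact mul_nonneg (Nat.cast_nonneg n) (hpos _ _ _ _ (Ne.symm h1) (Ne.symm h2))
    · intro k
      by_cases hk : k = i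
      · simp [M, hk]
      · rw [← Finset.add_sum_erase univ _ (mem_univ j)]
        have : ∑ l ∈ univ.erase j, M k l = n * ∑ l ∈ univ.erase j, y k l i j := by
          rw [Finset.mul_sum]
          refine Finset.sum_congr rfl fun l hl => ?_
          have hl' := Finset.ne_of_mem_erase hl
          simp only [M, if_neg hk, if_neg hl']
          rw [hsym i j k l (Ne.symm hk) (Ne.symm hl')]
        rw [this, hrow k i j hk]
        simp [M, hk, hn0]
    · intro l
      by_cases hl : l = j
      · simp [M, hl]
      · rw [← Finset.add_sum_erase univ _ (mem_univ i)]
        have : ∑ k ∈ univ.erase i, M k l = n * ∑ k ∈ univ.erase i, y k l i j := by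
          rw [Finset.mul_sum]
          refine Finset.sum_congr rfl fun k hk => ?_
          have hk' := Finset.ne_of_mem_erase hk
          simp only [M, if_neg hk', if_neg hl]
          rw [hsym i j k l (Ne.symm hk') (Ne.symm hl)]
        rw [this, hcol l i j hl]
        simp [M, hl, hn0]
  obtain ⟨w, hw0, hw1, hwM⟩ := exists_eq_sum_perm_of_mem_doublyStochastic hM
  have hent : ∀ k l, M k l = ∑ σ, if σ k = l then w σ else 0 := by
    intro k l
    rw [← hwM, Matrix.sum_apply]
    refine Finset.sum_congr rfl fun σ _ => ?_
    simp [Equiv.Perm.permMatrix, PEquiv.toMatrix_apply, Equiv.toPEquiv_apply]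
  have hsupp : ∀ σ, w σ ≠ 0 → σ i = j := by
    intro σ hσ
    by_contra hne
    have h0 : M i (σ i) = 0 := by simp [M, hne]
    rw [hent, Finset.sum_eq_zero_iff_of_nonneg] at h0
    · have := h0 σ (mem_univ _)
      simp at this
      exact hσ this
    · intro τ _
      split_ifs
      · exact hw0 τ
      · exact le_rfl
  have hMy : ∀ k l, k ≠ i → l ≠ j → (n : ℝ) * y i j k l = ∑ σ, if σ k = l then w σ else 0 := by
    intro k l hk hl
    rw [← hent]
    simp [M, hk, hl]
  refine ⟨w, hw1, ?_, hMy⟩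
  have hcost : ∑ σ, w σ * (∑ k ∈ univ.erase i, P i k * D j (σ k)) = lo i j := by
    have h := hz i j
    have h' : lo i j = ∑ k ∈ univ.erase i, ∑ l, P i k * D j l * M k l := by
      rw [eq_div_iff hn0] at h
      rw [← h, projZ, Finset.sum_mul]
      refine Finset.sum_congr rfl fun k hk => ?_
      have hk' := Finset.ne_of_mem_erase hk
      rw [← Finset.add_sum_erase univ _ (mem_univ j), Finset.sum_mul]
      have : M k j = 0 := by simp [M, hk']
      rw [this, mul_zero, zero_add]
      refine Finset.sum_congr rfl fun l hl => ?_
      have hl' := Finset.ne_of_mem_erase hl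
      simp only [M, if_neg hk', if_neg hl']
      ring
    rw [h']
    simp_rw [Finset.mul_sum]
    rw [Finset.sum_comm]
    refine Finset.sum_congr rfl fun k hk => ?_
    simp_rw [hent, Finset.mul_sum]
    rw [Finset.sum_comm]
    refine Finset.sum_congr rfl fun σ _ => ?_
    simp [mul_comm]
  have hge : ∀ σ : Equiv.Perm (Fin n), σ i = j →
      lo i j ≤ ∑ k ∈ univ.erase i, P i k * D j (σ k) :=
    fun σ hσ => (hlo i j).2 ⟨σ, hσ, rfl⟩
  have hzero : ∑ σ, w σ * ((∑ k ∈ univ.erase i, P i k * D j (σ k)) - lo i j) = 0 := by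
    simp_rw [mul_sub]
    rw [Finset.sum_sub_distrib, hcost, ← Finset.sum_mul, hw1, one_mul, sub_self]
  rw [Finset.sum_eq_zero_iff_of_nonneg] at hzero
  · intro σ hσ
    refine ⟨hsupp σ hσ, ?_⟩
    have := (mul_eq_zero.mp (hzero σ (mem_univ _))).resolve_left hσ
    linarith
  · intro σ _
    by_cases hσ : w σ = 0
    · simp [hσ]
    · exact mul_nonneg (hw0 σ) (sub_nonneg.mpr (hge σ (hsupp σ hσ)))

/-- under the stated structure of the coefficients, the uniform doubly
stochastic matrix `x*` with `x*_{ij} = 1/n` admits no `y` with `(x*, y) ∈ LAJ(D,P)`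
and `z(y)_{ij} = l_{ij}/n` for all `i,j`. -/
theorem no_LAJ_lift_of_uniform (n : ℕ) (hn : 2 ≤ n)
    (P D lo : Fin n → Fin n → ℝ)
    (hlo : ∀ i j, IsLVal P D i j (lo i j))
    (a b c d : Fin n) (hac : a ≠ c) (hbd : b ≠ d)
    (h1 : ∀ σ : Equiv.Perm (Fin n), σ a = b →
      (∑ k ∈ univ.erase a, P a k * D b (σ k)) = lo a b → σ c = d)
    (h2 : ∀ σ : Equiv.Perm (Fin n), σ c = d →
      (∑ k ∈ univ.erase c, P c k * D d (σ k)) = lo c d → σ a ≠ b) :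
    ¬ ∃ y : Fin n → Fin n → Fin n → Fin n → ℝ,
        MemLAJ (fun _ _ => (1 : ℝ) / n) y ∧
        ∀ i j, projZ P D y i j = lo i j / n := by
  rintro ⟨y, hy, hz⟩
  obtain ⟨w, hw1, hws, hwy⟩ := laj_decomp n hn P D lo hlo y hy hz a b
  obtain ⟨v, hv1, hvs, hvy⟩ := laj_decomp n hn P D lo hlo y hy hz c d
  have e1 : (n : ℝ) * y a b c d = 1 := by
    rw [hwy c d hac.symm hbd.symm, ← hw1]
    refine Finset.sum_congr rfl fun σ _ => ?_
    by_cases hσ : w σ = 0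
    · simp [hσ]
    · rw [if_pos (h1 σ (hws σ hσ).1 (hws σ hσ).2)]
  have e2 : (n : ℝ) * y c d a b = 0 := by
    rw [hvy a b hac hbd]
    refine Finset.sum_eq_zero fun σ _ => ?_
    by_cases hσ : v σ = 0
    · simp [hσ]
    · rw [if_neg (h2 σ (hvs σ hσ).1 (hvs σ hσ).2)]
  rw [hy.2.2.1 a b c d hac hbd, e2] at e1
  exact zero_ne_one e1
end

section
/- Every ab-cut is valid for the quadratic assignment problem: for every permutation matrix x ∈ X_n, with z defined by z_{ij} = x_{ij} · Σ_{k≠i, l≠j} p_{ik} d_{jl} x_{kl} for all i,j, for all a,b ∈ {1,…,n} and every triple (β¹,β²,δ) that is dual feasible for (a,b), the inequality z_{ab} ≥ −(Σ_{l≠b} β¹_l + Σ_{k≠a} β²_k)·x_{ab} − Σ_{k≠a, l≠b} δ_{kl} x_{kl} holds. -/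
open Finset

/-- `x` is a permutation matrix (the set `X_n`): a 0/1 matrix with exactly one `1`
in each row and each column. -/
def IsXn {n : ℕ} (x : Fin n → Fin n → ℝ) : Prop :=
  (∀ i j, x i j = 0 ∨ x i j = 1) ∧ (∀ i, ∑ j, x i j = 1) ∧ (∀ j, ∑ i, x i j = 1)

/-- `(β1, β2, δ)` is dual feasible for `(a,b)`:
`δ_{kl} ≥ 0` and `−β¹_l − β²_k ≤ p_{ak} d_{bl} + δ_{kl}` for all `k≠a, l≠b`. -/
def DualFeasible {n : ℕ} (P D : Fin n → Fin n → ℝ) (a b : Fin n)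
    (β1 β2 : Fin n → ℝ) (δ : Fin n → Fin n → ℝ) : Prop :=
  (∀ k l, k ≠ a → l ≠ b → 0 ≤ δ k l) ∧
  (∀ k l, k ≠ a → l ≠ b → -β1 l - β2 k ≤ P a k * D b l + δ k l)

/-- every `ab`-cut is valid for the quadratic assignment problem: for
every permutation matrix `x ∈ X_n`, with `z_{ij} = x_{ij} · Σ_{k≠i,l≠j} p_{ik} d_{jl} x_{kl}`,
and every dual feasible triple `(β¹,β²,δ)` for `(a,b)`, the `ab`-cut holds at `(x,z)`. -/
theorem ab_cut_valid_for_QAP (n : ℕ) (hn : 2 ≤ n) (P D : Fin n → Fin n → ℝ)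
    (x z : Fin n → Fin n → ℝ) (hx : IsXn x)
    (hz : ∀ i j, z i j =
      x i j * ∑ k ∈ univ.erase i, ∑ l ∈ univ.erase j, P i k * D j l * x k l)
    (a b : Fin n) (β1 β2 : Fin n → ℝ) (δ : Fin n → Fin n → ℝ)
    (hdual : DualFeasible P D a b β1 β2 δ) :
    -((∑ l ∈ univ.erase b, β1 l) + (∑ k ∈ univ.erase a, β2 k)) * x a b
      - (∑ k ∈ univ.erase a, ∑ l ∈ univ.erase b, δ k l * x k l) ≤ z a b := by
  obtain ⟨h01, hr, hc⟩ := hx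
  obtain ⟨hd, hf⟩ := hdual
  have hnn : ∀ i j, 0 ≤ x i j := fun i j => by
    rcases h01 i j with h | h <;> rw [h] <;> norm_num
  rw [hz a b]
  rcases h01 a b with h | h
  · rw [h]
    have : 0 ≤ ∑ k ∈ univ.erase a, ∑ l ∈ univ.erase b, δ k l * x k l :=
      sum_nonneg fun k hk => sum_nonneg fun l hl =>
        mul_nonneg (hd k l (ne_of_mem_erase hk) (ne_of_mem_erase hl)) (hnn k l)
    linarith
  · rw [h]
    have hrow0 : ∑ l ∈ univ.erase b, x a l = 0 := by
      have := add_sum_erase univ (fun l => x a l) (mem_univ b)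
      have h2 := hr a
      linarith
    have hcol0 : ∑ k ∈ univ.erase a, x k b = 0 := by
      have := add_sum_erase univ (fun k => x k b) (mem_univ a)
      have h2 := hc b
      linarith
    have hra : ∀ l ∈ univ.erase b, x a l = 0 :=
      (sum_eq_zero_iff_of_nonneg fun l _ => hnn a l).1 hrow0
    have hcb : ∀ k ∈ univ.erase a, x k b = 0 :=
      (sum_eq_zero_iff_of_nonneg fun k _ => hnn k b).1 hcol0
    have hr1 : ∀ k ∈ univ.erase a, ∑ l ∈ univ.erase b, x k l = 1 := fun k hk => by
      have := add_sum_erase univ (fun l => x k l) (mem_univ b)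
      have h2 := hr k
      have h3 := hcb k hk
      linarith
    have hc1 : ∀ l ∈ univ.erase b, ∑ k ∈ univ.erase a, x k l = 1 := fun l hl => by
      have := add_sum_erase univ (fun k => x k l) (mem_univ a)
      have h2 := hc l
      have h3 := hra l hl
      linarith
    have e1 : ∑ l ∈ univ.erase b, β1 l
        = ∑ k ∈ univ.erase a, ∑ l ∈ univ.erase b, β1 l * x k l := by
      rw [sum_comm]
      refine sum_congr rfl fun l hl => ?_
      rw [← mul_sum, hc1 l hl, mul_one]
    have e2 : ∑ k ∈ univ.erase a, β2 k
        = ∑ k ∈ univ.erase a, ∑ l ∈ univ.erase b, β2 k * x k l := by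
      refine sum_congr rfl fun k hk => ?_
      rw [← mul_sum, hr1 k hk, mul_one]
    have key : ∑ k ∈ univ.erase a, ∑ l ∈ univ.erase b, (-β1 l - β2 k) * x k l
        ≤ ∑ k ∈ univ.erase a, ∑ l ∈ univ.erase b, (P a k * D b l + δ k l) * x k l :=
      sum_le_sum fun k hk => sum_le_sum fun l hl =>
        mul_le_mul_of_nonneg_right
          (hf k l (ne_of_mem_erase hk) (ne_of_mem_erase hl)) (hnn k l)
    simp only [sub_mul, add_mul, neg_mul, sum_add_distrib, sum_sub_distrib,
      sum_neg_distrib] at key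
    rw [e1, e2]
    linarith
end

section
/- Every ab-cut is valid for the projection of the relaxed Adams–Johnson linearization: for every pair (x,y) ∈ LAJ(D,P), all a,b ∈ {1,…,n}, and every triple (β¹,β²,δ) that is dual feasible for (a,b), the inequality z(y)_{ab} ≥ −(Σ_{l≠b} β¹_l + Σ_{k≠a} β²_k)·x_{ab} − Σ_{k≠a, l≠b} δ_{kl} x_{kl} holds. -/
open Finset

/-- every `ab`-cut is valid for the projection of the relaxed
Adams–Johnson linearization. -/
theorem ab_cut_valid_for_proj_LAJ (n : ℕ) (hn : 2 ≤ n) (P D : Fin n → Fin n → ℝ)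
    (x : Fin n → Fin n → ℝ) (y : Fin n → Fin n → Fin n → Fin n → ℝ)
    (hxy : MemLAJ x y)
    (a b : Fin n) (β1 β2 : Fin n → ℝ) (δ : Fin n → Fin n → ℝ)
    (hdual : DualFeasible P D a b β1 β2 δ) :
    -((∑ l ∈ univ.erase b, β1 l) + (∑ k ∈ univ.erase a, β2 k)) * x a b
      - (∑ k ∈ univ.erase a, ∑ l ∈ univ.erase b, δ k l * x k l) ≤ projZ P D y a b := by
  obtain ⟨_, hpos, hsym, hc, hr⟩ := hxy
  obtain ⟨hδ, hf⟩ := hdual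
  have hle : ∀ k l, k ≠ a → l ≠ b → y a b k l ≤ x k l := by
    intro k l hk hl
    rw [← hc b k l hl.symm]
    exact Finset.single_le_sum (f := fun i => y i b k l)
      (fun i hi => hpos i b k l (Finset.ne_of_mem_erase hi) hl.symm)
      (Finset.mem_erase.2 ⟨hk.symm, Finset.mem_univ _⟩)
  have h1 : ∑ k ∈ univ.erase a, ∑ l ∈ univ.erase b, β1 l * y k l a b
      = (∑ l ∈ univ.erase b, β1 l) * x a b := by
    rw [Finset.sum_comm, Finset.sum_mul]
    refine Finset.sum_congr rfl fun l hl => ?_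
    rw [← Finset.mul_sum, hc l a b (Finset.ne_of_mem_erase hl)]
  have h2 : ∑ k ∈ univ.erase a, ∑ l ∈ univ.erase b, β2 k * y k l a b
      = (∑ k ∈ univ.erase a, β2 k) * x a b := by
    rw [Finset.sum_mul]
    refine Finset.sum_congr rfl fun k hk => ?_
    rw [← Finset.mul_sum, hr k a b (Finset.ne_of_mem_erase hk)]
  have key : 0 ≤ ∑ k ∈ univ.erase a, ∑ l ∈ univ.erase b,
      (P a k * D b l * y a b k l + β1 l * y k l a b + β2 k * y k l a b + δ k l * x k l) := by
    refine Finset.sum_nonneg fun k hk => Finset.sum_nonneg fun l hl => ?_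
    have hk' := Finset.ne_of_mem_erase hk
    have hl' := Finset.ne_of_mem_erase hl
    rw [← hsym a b k l hk'.symm hl'.symm]
    have e1 := mul_le_mul_of_nonneg_right (hf k l hk' hl') (hpos a b k l hk'.symm hl'.symm)
    have e2 := mul_le_mul_of_nonneg_left (hle k l hk' hl') (hδ k l hk' hl')
    linarith
  simp only [Finset.sum_add_distrib] at key
  rw [h1, h2] at key
  unfold projZ
  linarith
end

section
/- Let (x*,z*) ∈ LXY(D,P) and a,b ∈ {1,…,n} with x*_{ab} > 0. Suppose there exists a bijection φ : {1,…,n}\{a} → {1,…,n}\{b} attaining the minimum l_{ab} whose associated 0/1 matrix x̄ (with x̄_{kl} = 1 iff φ(k) = l) satisfies x̄_{kl} ≤ x*_{kl}/x*_{ab} for all k≠a, l≠b. Then no ab-cut is violated by (x*,z*): for every triple (β¹,β²,δ) that is dual feasible for (a,b), the inequality −(Σ_{l≠b} β¹_l + Σ_{k≠a} β²_k)·x*_{ab} − Σ_{k≠a, l≠b} δ_{kl} x*_{kl} ≤ z*_{ab} holds. -/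
open Finset

/-- `(x, z)` lies in the linear relaxation `LXY(D,P)` of the Xia–Yuan linearization,
where `lo i j = l_{ij}` and `up i j = u_{ij}` are the Big-M constants. -/
def MemLXY {n : ℕ} (P D lo up : Fin n → Fin n → ℝ)
    (x z : Fin n → Fin n → ℝ) : Prop :=
  IsLXn x ∧
  (∀ i j, lo i j * x i j ≤ z i j) ∧
  (∀ i j, (∑ k ∈ univ.erase i, ∑ l ∈ univ.erase j, P i k * D j l * x k l)
      + up i j * (x i j - 1) ≤ z i j)

/-- `v` is the corresponding maximum. -/
def IsUVal {n : ℕ} (P D : Fin n → Fin n → ℝ) (i j : Fin n) (v : ℝ) : Prop :=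
  IsGreatest {w : ℝ | ∃ σ : Equiv.Perm (Fin n), σ i = j ∧
    w = ∑ k ∈ univ.erase i, P i k * D j (σ k)} v

/-- if `x*_{ab} > 0` and some bijection attaining the minimum `l_{ab}`
(represented as a permutation `σ` with `σ a = b`) has its 0/1 matrix dominated entrywise
by `x*_{kl}/x*_{ab}`, then no `ab`-cut is violated by `(x*, z*)`. -/
theorem no_violated_ab_cut_of_dominated_argmin (n : ℕ) (hn : 2 ≤ n)
    (P D lo up : Fin n → Fin n → ℝ)
    (hlo : ∀ i j, IsLVal P D i j (lo i j))
    (hup : ∀ i j, IsUVal P D i j (up i j))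
    (xs zs : Fin n → Fin n → ℝ) (hxz : MemLXY P D lo up xs zs)
    (a b : Fin n) (hab : 0 < xs a b)
    (σ : Equiv.Perm (Fin n)) (hσab : σ a = b)
    (hmin : (∑ k ∈ univ.erase a, P a k * D b (σ k)) = lo a b)
    (hdom : ∀ k l, k ≠ a → l ≠ b →
      (if σ k = l then (1 : ℝ) else 0) ≤ xs k l / xs a b)
    (β1 β2 : Fin n → ℝ) (δ : Fin n → Fin n → ℝ)
    (hdual : DualFeasible P D a b β1 β2 δ) :
    -((∑ l ∈ univ.erase b, β1 l) + (∑ k ∈ univ.erase a, β2 k)) * xs a b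
      - (∑ k ∈ univ.erase a, ∑ l ∈ univ.erase b, δ k l * xs k l) ≤ zs a b := by
  obtain ⟨⟨hx0, -, -⟩, hz, -⟩ := hxz
  obtain ⟨hδ, hd⟩ := hdual
  have hβ : ∑ l ∈ univ.erase b, β1 l = ∑ k ∈ univ.erase a, β1 (σ k) := by
    symm
    refine Finset.sum_bij (fun k _ => σ k) ?_ ?_ ?_ ?_
    · intro k hk
      have hka := Finset.ne_of_mem_erase hk
      simp only [mem_erase, mem_univ, and_true]
      intro h
      exact hka (σ.injective (h.trans hσab.symm))
    · intro k _ k' _ h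
      exact σ.injective h
    · intro l hl
      have hlb := Finset.ne_of_mem_erase hl
      refine ⟨σ.symm l, ?_, by simp⟩
      simp only [mem_erase, mem_univ, and_true]
      intro h
      apply hlb
      rw [← hσab, ← h]
      simp
    · intro k _
      rfl
  have key : ∀ k ∈ univ.erase a, -(β1 (σ k) + β2 k) * xs a b
      ≤ P a k * D b (σ k) * xs a b + ∑ l ∈ univ.erase b, δ k l * xs k l := by
    intro k hk
    have hka := Finset.ne_of_mem_erase hk
    have hkb : σ k ≠ b := fun h => hka (σ.injective (h.trans hσab.symm))
    have h1 := hdom k (σ k) hka hkb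
    rw [if_pos rfl, le_div_iff₀ hab, one_mul] at h1
    have h2 := mul_le_mul_of_nonneg_right (hd k (σ k) hka hkb) hab.le
    have h3 := mul_le_mul_of_nonneg_left h1 (hδ k (σ k) hka hkb)
    have h4 : δ k (σ k) * xs k (σ k) ≤ ∑ l ∈ univ.erase b, δ k l * xs k l :=
      Finset.single_le_sum (f := fun l => δ k l * xs k l)
        (fun l hl => mul_nonneg (hδ k l hka (Finset.ne_of_mem_erase hl)) (hx0 k l))
        (Finset.mem_erase.2 ⟨hkb, mem_univ _⟩)
    linarith
  have hs := Finset.sum_le_sum key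
  rw [Finset.sum_add_distrib, ← Finset.sum_mul, ← Finset.sum_mul, hmin,
    Finset.sum_neg_distrib, Finset.sum_add_distrib, ← hβ] at hs
  linarith [hz a b]
end
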